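/- Let k_d > 0, T_I > 0, h₀, h₁ ∈ ℝ³, and let k_p : [0,∞) → [0,1] be continuously differentiable with k_p(0) = 0, 0 ≤ k_p'(s) ≤ k_d/(2T_I²) for all s, and k_p'(s) = 0 for s ≥ T_I. Then for every ε > 0 there exists a constant C > 0, depending only on ε, k_d and T_I, such that for every twice continuously differentiable ℓ : [0,∞) → ℝ³, setting h(t) = h₀ + ∫₀ᵗ ℓ(s) ds, one has for all T > 0 and all t ∈ [0,T]: |∫₀ᵗ ( −k_p'(s)(h₁ − h(s))·ℓ''(s) + k_p(s) ℓ(s)·ℓ''(s) ) ds| ≤ C(|h₁ − h₀|² + ∫₀ᵀ |ℓ(s)|² ds) + ε ∫₀ᵗ |ℓ''(s)|² ds. -/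

import Mathlib

open MeasureTheory
open scoped RealInnerProductSpace

noncomputable section

lemma cs_aux (f : ℝ → EuclideanSpace ℝ (Fin 3)) (hf : Continuous f) (s : ℝ) (hs : 0 ≤ s) :
    ‖∫ x in (0:ℝ)..s, f x‖ ^ 2 ≤ s * ∫ x in (0:ℝ)..s, ‖f x‖ ^ 2 := by
  rcases hs.eq_or_lt with rfl | hs'
  · simp
  have h1 : ‖∫ x in (0:ℝ)..s, f x‖ ≤ ∫ x in (0:ℝ)..s, ‖f x‖ :=
    intervalIntegral.norm_integral_le_integral_norm hs
  set A := ∫ x in (0:ℝ)..s, ‖f x‖ with hA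
  set B := ∫ x in (0:ℝ)..s, ‖f x‖ ^ 2 with hB
  have h2 : 0 ≤ ∫ x in (0:ℝ)..s, (s * ‖f x‖ - A) ^ 2 :=
    intervalIntegral.integral_nonneg hs (fun x _ => sq_nonneg _)
  have h3 : ∫ x in (0:ℝ)..s, (s * ‖f x‖ - A) ^ 2 = s ^ 2 * B - 2 * s * A * A + s * A ^ 2 := by
    have : ∀ x, (s * ‖f x‖ - A) ^ 2 = s ^ 2 * ‖f x‖ ^ 2 - 2 * s * A * ‖f x‖ + A ^ 2 := by
      intro x; ring
    simp_rw [this]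
    rw [intervalIntegral.integral_add, intervalIntegral.integral_sub,
      intervalIntegral.integral_const_mul, intervalIntegral.integral_const_mul,
      intervalIntegral.integral_const]
    · simp [hA, hB]
    all_goals exact Continuous.intervalIntegrable (by fun_prop) _ _
  have h4 : A ^ 2 ≤ s * B := by
    rw [h3] at h2
    have : 0 ≤ s * (s * B - A ^ 2) := by nlinarith
    have := nonneg_of_mul_nonneg_right this hs'
    linarith
  have := norm_nonneg (∫ x in (0:ℝ)..s, f x)
  nlinarith

/-- Estimate (derivative of spring term): under the hypotheses (hypkp) on `k_p`, for every
`ε > 0` there is `C > 0` depending only on `ε`, `k_d`, `T_I` such that for every `C²`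
velocity `ℓ`, with `h t = h₀ + ∫₀ᵗ ℓ`, for all `T > 0` and `t ∈ [0,T]`,
`|∫₀ᵗ (−k_p'(h₁−h)·ℓ'' + k_p ℓ·ℓ'')| ≤ C(|h₁−h₀|² + ∫₀ᵀ |ℓ|²) + ε ∫₀ᵗ |ℓ''|²`. -/
theorem stmt9 (kd TI : ℝ) (hkd : 0 < kd) (hTI : 0 < TI) :
    ∀ ε : ℝ, 0 < ε →
    ∃ C > (0:ℝ), ∀ (h₀ h₁ : EuclideanSpace ℝ (Fin 3)) (kp kp' : ℝ → ℝ),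
      (∀ s : ℝ, HasDerivAt kp (kp' s) s) → Continuous kp' → kp 0 = 0 →
      (∀ s : ℝ, 0 ≤ s → kp s ∈ Set.Icc (0:ℝ) 1) →
      (∀ s : ℝ, 0 ≤ s → 0 ≤ kp' s ∧ kp' s ≤ kd / (2 * TI ^ 2)) →
      (∀ s : ℝ, TI ≤ s → kp' s = 0) →
      ∀ (ℓ ℓ' ℓ'' : ℝ → EuclideanSpace ℝ (Fin 3)),
      (∀ s : ℝ, HasDerivAt ℓ (ℓ' s) s) → (∀ s : ℝ, HasDerivAt ℓ' (ℓ'' s) s) →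
      Continuous ℓ'' →
      ∀ h : ℝ → EuclideanSpace ℝ (Fin 3),
      (∀ t : ℝ, h t = h₀ + ∫ s in (0:ℝ)..t, ℓ s) →
      ∀ T : ℝ, 0 < T → ∀ t ∈ Set.Icc (0:ℝ) T,
        |∫ s in (0:ℝ)..t, (-(kp' s * ⟪h₁ - h s, ℓ'' s⟫) + kp s * ⟪ℓ s, ℓ'' s⟫)|
          ≤ C * (‖h₁ - h₀‖ ^ 2 + ∫ s in (0:ℝ)..T, ‖ℓ s‖ ^ 2)
            + ε * ∫ s in (0:ℝ)..t, ‖ℓ'' s‖ ^ 2 := by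
  intro ε hε
  have hM : 0 < kd / (2 * TI ^ 2) := by positivity
  set M := kd / (2 * TI ^ 2) with hMdef
  refine ⟨M * (1 + TI) / ε + 1 / (2 * ε), by positivity, ?_⟩
  intro h₀ h₁ kp kp' hkp hkp'c hkp0 hkpI hkp' hkpT ℓ ℓ' ℓ'' hℓ hℓ' hℓc h hh T hT t ht
  have ℓc : Continuous ℓ := continuous_iff_continuousAt.2 fun s => (hℓ s).continuousAt
  set I := ∫ s in (0:ℝ)..T, ‖ℓ s‖ ^ 2 with hI
  have hI0 : 0 ≤ I := intervalIntegral.integral_nonneg hT.le (fun x _ => sq_nonneg _)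
  have hmono : ∀ s, 0 ≤ s → s ≤ T → ∫ x in (0:ℝ)..s, ‖ℓ x‖ ^ 2 ≤ I := by
    intro s hs hsT
    exact intervalIntegral.integral_mono_interval le_rfl hs hsT
      (Filter.Eventually.of_forall fun x => sq_nonneg _)
      (Continuous.intervalIntegrable (by fun_prop) _ _)
  set D := ‖h₁ - h₀‖ with hD
  set K := 2 * D ^ 2 + 2 * TI * I with hK
  have hK0 : 0 ≤ K := by positivity
  have hbd : ∀ s, 0 ≤ s → s ≤ T → kp' s ^ 2 * ‖h₁ - h s‖ ^ 2 ≤ M * K * kp' s := by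
    intro s hs hsT
    rcases le_total TI s with h1 | h1
    · simp [hkpT s h1]
    have hn : ‖h₁ - h s‖ ≤ D + ‖∫ x in (0:ℝ)..s, ℓ x‖ := by
      rw [hh s, ← sub_sub]; exact norm_sub_le _ _
    have hc := cs_aux ℓ ℓc s hs
    have hc2 : s * ∫ x in (0:ℝ)..s, ‖ℓ x‖ ^ 2 ≤ TI * I :=
      mul_le_mul h1 (hmono s hs hsT)
        (intervalIntegral.integral_nonneg hs (fun x _ => sq_nonneg _)) hTI.le
    have hq : ‖h₁ - h s‖ ^ 2 ≤ K := by
      have := norm_nonneg (h₁ - h s)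
      have h5 : ‖h₁ - h s‖ ^ 2 ≤ (D + ‖∫ x in (0:ℝ)..s, ℓ x‖) ^ 2 := by gcongr
      nlinarith [sq_nonneg (D - ‖∫ x in (0:ℝ)..s, ℓ x‖)]
    obtain ⟨ha, hb⟩ := hkp' s hs
    calc kp' s ^ 2 * ‖h₁ - h s‖ ^ 2 ≤ (M * kp' s) * K := by
          apply mul_le_mul _ hq (by positivity) (by positivity)
          rw [sq]; gcongr
      _ = _ := by ring
  have key : ‖∫ s in (0:ℝ)..t, (-(kp' s * ⟪h₁ - h s, ℓ'' s⟫) + kp s * ⟪ℓ s, ℓ'' s⟫)‖ ≤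
      ∫ s in (0:ℝ)..t, (M * K / (2 * ε) * kp' s + 1 / (2 * ε) * ‖ℓ s‖ ^ 2 + ε * ‖ℓ'' s‖ ^ 2) := by
    apply intervalIntegral.norm_integral_le_of_norm_le ht.1
    · refine Filter.Eventually.of_forall fun s hs => ?_
      have hs0 : 0 ≤ s := hs.1.le
      have hb := hbd s hs0 (hs.2.trans ht.2)
      obtain ⟨ha, _⟩ := hkp' s hs0
      obtain ⟨hc, hd⟩ := hkpI s hs0
      have e1 := abs_real_inner_le_norm (h₁ - h s) (ℓ'' s)
      have e2 := abs_real_inner_le_norm (ℓ s) (ℓ'' s)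
      have e3 : ∀ a b : ℝ, a * b ≤ 1 / (2 * ε) * a ^ 2 + ε / 2 * b ^ 2 := by
        intro a b
        have : 1 / (2 * ε) * a ^ 2 + ε / 2 * b ^ 2 - a * b = 1 / (2 * ε) * (a - ε * b) ^ 2 := by
          field_simp; ring
        have : 0 ≤ 1 / (2 * ε) * (a - ε * b) ^ 2 := by positivity
        linarith
      have f1 : |kp' s * ⟪h₁ - h s, ℓ'' s⟫| ≤ kp' s * ‖h₁ - h s‖ * ‖ℓ'' s‖ := by
        rw [abs_mul, abs_of_nonneg ha, mul_assoc]; gcongr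
      have f2 : |kp s * ⟪ℓ s, ℓ'' s⟫| ≤ ‖ℓ s‖ * ‖ℓ'' s‖ := by
        rw [abs_mul, abs_of_nonneg hc]
        calc _ ≤ 1 * (‖ℓ s‖ * ‖ℓ'' s‖) := by gcongr
          _ = _ := one_mul _
      have f3 := e3 (kp' s * ‖h₁ - h s‖) ‖ℓ'' s‖
      have f4 := e3 ‖ℓ s‖ ‖ℓ'' s‖
      have f5 : 1 / (2 * ε) * (kp' s * ‖h₁ - h s‖) ^ 2 ≤ M * K / (2 * ε) * kp' s := by
        calc _ ≤ 1 / (2 * ε) * (M * K * kp' s) := by rw [mul_pow]; gcongr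
          _ = _ := by ring
      rw [Real.norm_eq_abs]
      have f6 := abs_add_le (-(kp' s * ⟪h₁ - h s, ℓ'' s⟫)) (kp s * ⟪ℓ s, ℓ'' s⟫)
      rw [abs_neg] at f6
      linarith
    · exact Continuous.intervalIntegrable (by fun_prop) _ _
  rw [Real.norm_eq_abs] at key
  refine key.trans ?_
  have hint : ∫ s in (0:ℝ)..t, kp' s = kp t - kp 0 :=
    intervalIntegral.integral_eq_sub_of_hasDerivAt (fun x _ => hkp x) (hkp'c.intervalIntegrable _ _)
  rw [intervalIntegral.integral_add, intervalIntegral.integral_add,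
      intervalIntegral.integral_const_mul, intervalIntegral.integral_const_mul,
      intervalIntegral.integral_const_mul, hint, hkp0, sub_zero]
  · have g1 : M * K / (2 * ε) * kp t ≤ M * K / (2 * ε) * 1 := by
      gcongr; exact (hkpI t ht.1).2
    have g2 : 1 / (2 * ε) * (∫ s in (0:ℝ)..t, ‖ℓ s‖ ^ 2) ≤ 1 / (2 * ε) * I := by
      gcongr; exact hmono t ht.1 ht.2
    have g3 : (M * (1 + TI) / ε + 1 / (2 * ε)) * (D ^ 2 + I) - M * K / (2 * ε) - 1 / (2 * ε) * I
        = M * (TI * D ^ 2 + I) / ε + 1 / (2 * ε) * D ^ 2 := by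
      rw [hK]; field_simp; ring
    have g4 : 0 ≤ M * (TI * D ^ 2 + I) / ε + 1 / (2 * ε) * D ^ 2 := by positivity
    linarith
  all_goals exact Continuous.intervalIntegrable (by fun_prop) _ _
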